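/- Fix an integer n ≥ 1 and work in ℚ[X, Y, C₁, …, C_{n+1}], with the convention C₀ = 1. For 0 ≤ p ≤ n − 1 set B′_p = (−1)^p · Σ_{q=0}^{p} (−1)^q C_q · Σ_{i=0}^{p−q} C(n−q+1, i) X^i Y^{p−q−i}; set B′_p = 0 for p ≥ n and B′_{−1} = 0. Then Σ_{i=0}^{n} C(n+1−i, n−i) · ( X^{n−i} B′_i + X^{n−i} Y B′_{i−1} ) − C_n = Σ_{q=0}^{n} (−1)^{n+q−1} C_q · Σ_{j=0}^{n−q} C(n−q+1, j) X^j Y^{n−q−j}. -/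

import Mathlib

open MvPolynomial Finset

/-- Inner sums. -/
def auxS {R : Type*} [CommRing R] (x y : R) (N m : ℕ) : R :=
  ∑ i ∈ Finset.range (m + 1), (Nat.choose N i : R) * x ^ i * y ^ (m - i)

theorem auxS_succ {R : Type*} [CommRing R] (x y : R) (N m : ℕ) :
    auxS x y N (m + 1) = y * auxS x y N m + (Nat.choose N (m + 1) : R) * x ^ (m + 1) := by
  unfold auxS
  rw [Finset.sum_range_succ, Finset.mul_sum]
  congr 1
  · refine Finset.sum_congr rfl fun i hi => ?_
    have h : m + 1 - i = (m - i) + 1 := by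
      have := Finset.mem_range.1 hi
      omega
    rw [h]; ring
  · simp

/-- The untruncated closed form. -/
def auxT {R : Type*} [CommRing R] (x y : R) (c : ℕ → R) (n m : ℕ) : R :=
  (-1) ^ m * ∑ q ∈ Finset.range (m + 1), (-1) ^ q * c q * auxS x y (n - q + 1) (m - q)

theorem auxT_succ {R : Type*} [CommRing R] (x y : R) (c : ℕ → R) (n m : ℕ) :
    auxT x y c n (m + 1) + y * auxT x y c n m =
      (-1) ^ (m + 1) * ∑ q ∈ Finset.range (m + 1 + 1),
        (-1) ^ q * c q * ((Nat.choose (n - q + 1) (m + 1 - q) : R) * x ^ (m + 1 - q)) := by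
  unfold auxT
  rw [Finset.sum_range_succ, Finset.sum_range_succ (n := m + 1)]
  have h : ∑ q ∈ Finset.range (m + 1), (-1) ^ q * c q * auxS x y (n - q + 1) (m + 1 - q)
      = y * ∑ q ∈ Finset.range (m + 1), (-1) ^ q * c q * auxS x y (n - q + 1) (m - q)
       + ∑ q ∈ Finset.range (m + 1),
        (-1) ^ q * c q * ((Nat.choose (n - q + 1) (m + 1 - q) : R) * x ^ (m + 1 - q)) := by
    rw [Finset.mul_sum, ← Finset.sum_add_distrib]
    refine Finset.sum_congr rfl fun q hq => ?_
    have h : m + 1 - q = (m - q) + 1 := by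
      have := Finset.mem_range.1 hq
      omega
    rw [h, auxS_succ]; ring
  rw [h]
  simp [auxS]
  ring

theorem aux_alt {R : Type*} [CommRing R] (N : ℕ) :
    ∑ m ∈ Finset.range (N + 1), ((N + 1 - m : ℕ) : R) * (-1) ^ m * (Nat.choose (N + 1) m : R)
      = if N = 0 then 1 else 0 := by
  have h := congrArg (Int.cast : ℤ → R) (Int.alternating_sum_range_choose (n := N))
  push_cast at h
  have h2 : ∑ m ∈ Finset.range (N + 1),
      ((N + 1 - m : ℕ) : R) * (-1) ^ m * (Nat.choose (N + 1) m : R)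
      = ((N + 1 : ℕ) : R) * ∑ m ∈ Finset.range (N + 1), (-1) ^ m * (Nat.choose N m : R) := by
    rw [Finset.mul_sum]
    refine Finset.sum_congr rfl fun m hm => ?_
    have e : ((N.choose m * (N + 1) : ℕ) : R) = (((N + 1).choose m * (N + 1 - m) : ℕ) : R) :=
      congrArg _ (Nat.choose_mul_succ_eq N m)
    rw [Nat.cast_mul, Nat.cast_mul] at e
    linear_combination (-1) ^ m * (-e)
  rw [h2, h]
  split_ifs with h0
  · subst h0; simp
  · simp

theorem aux_main {R : Type*} [CommRing R] (x : R) (c : ℕ → R) (n : ℕ) :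
    ∑ i ∈ Finset.range (n + 1), ((n + 1 - i : ℕ) : R) * (x ^ (n - i) *
      ((-1) ^ i * ∑ q ∈ Finset.range (i + 1),
        (-1) ^ q * c q * ((Nat.choose (n - q + 1) (i - q) : R) * x ^ (i - q)))) = c n := by
  have h1 : ∀ i ∈ Finset.range (n + 1), ((n + 1 - i : ℕ) : R) * (x ^ (n - i) *
      ((-1) ^ i * ∑ q ∈ Finset.range (i + 1),
        (-1) ^ q * c q * ((Nat.choose (n - q + 1) (i - q) : R) * x ^ (i - q)))) =
      ∑ q ∈ Finset.range (i + 1), c q * x ^ (n - q) * (((n - q + 1 - (i - q) : ℕ) : R) *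
        (-1) ^ (i - q) * (Nat.choose (n - q + 1) (i - q) : R)) := by
    intro i hi
    have hi := Finset.mem_range.1 hi
    simp only [Finset.mul_sum]
    refine Finset.sum_congr rfl fun q hq => ?_
    have hq := Finset.mem_range.1 hq
    obtain ⟨m, rfl⟩ : ∃ m, i = q + m := ⟨i - q, by omega⟩
    obtain ⟨k, rfl⟩ : ∃ k, n = q + m + k := ⟨n - (q + m), by omega⟩
    have e1 : q + m + k + 1 - (q + m) = k + 1 := by omega
    have e2 : q + m + k - (q + m) = k := by omega
    have e3 : q + m - q = m := by omega
    have e4 : q + m + k - q = m + k := by omega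
    have e5 : m + k + 1 - m = k + 1 := by omega
    rw [e1, e2, e3, e4, e5]
    have e6 : ((-1 : R)) ^ q * (-1) ^ q = 1 := by rw [← mul_pow]; simp
    rw [pow_add (-1 : R), pow_add x]
    linear_combination (((k + 1 : ℕ) : R) * x ^ k * (-1) ^ m * c q *
      ((Nat.choose (m + k + 1) m : R) * x ^ m)) * e6
  rw [Finset.sum_congr rfl h1]
  rw [Finset.sum_sigma', Finset.sum_bij' (t := (Finset.range (n + 1)).sigma
      (fun q => Finset.range (n - q + 1)))
    (g := fun p => c p.1 * x ^ (n - p.1) * (((n - p.1 + 1 - p.2 : ℕ) : R) *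
        (-1) ^ p.2 * (Nat.choose (n - p.1 + 1) p.2 : R)))
    (i := fun p _ => ⟨p.2, p.1 - p.2⟩) (j := fun p _ => ⟨p.1 + p.2, p.1⟩)]
  · rw [← Finset.sum_sigma' (Finset.range (n + 1)) (fun q => Finset.range (n - q + 1))
      (fun q m => c q * x ^ (n - q) * (((n - q + 1 - m : ℕ) : R) *
        (-1) ^ m * (Nat.choose (n - q + 1) m : R)))]
    simp only [← Finset.mul_sum, aux_alt]
    rw [Finset.sum_range_succ, Finset.sum_eq_zero]
    · simp
    · intro q hq
      have := Finset.mem_range.1 hq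
      rw [if_neg (by omega), mul_zero]
  · rintro ⟨a, b⟩ h
    simp only [Finset.mem_sigma, Finset.mem_range] at h ⊢
    omega
  · rintro ⟨a, b⟩ h
    simp only [Finset.mem_sigma, Finset.mem_range] at h ⊢
    omega
  · rintro ⟨a, b⟩ h
    simp only [Finset.mem_sigma, Finset.mem_range] at h
    have : b + (a - b) = a := by omega
    simp [this]
  · rintro ⟨a, b⟩ h
    simp
  · rintro ⟨a, b⟩ h
    rfl

/-- The differential `∂(s⁻¹c_n) = h(c_n) - c_n` in the relative Sullivan model of the
Borel construction: with `B′_p` the relative closed forms (cut off to `0` for `p ≥ n`,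
and `B′_{-1} = 0`),
`∑_{i=0}^{n} C(n+1-i, n-i) (X^{n-i} B′_i + X^{n-i} Y B′_{i-1}) - C_n
  = ∑_{q=0}^{n} (-1)^{n+q-1} C_q ∑_{j=0}^{n-q} C(n-q+1,j) X^j Y^{n-q-j}`
in `ℚ[X, Y, C₁, …, C_{n+1}] = MvPolynomial (Fin (n+3)) ℚ` with `X = X 0`, `Y = X 1`,
`C_q = X (q+1)` for `1 ≤ q ≤ n+1`, and `C₀ = 1`. -/
theorem stmt6 (n : ℕ) (hn : 1 ≤ n)
    (Cc : ℕ → MvPolynomial (Fin (n + 3)) ℚ)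
    (hC0 : Cc 0 = 1)
    (hC : ∀ q, 1 ≤ q → q ≤ n + 1 → ∀ h : q + 1 < n + 3, Cc q = X ⟨q + 1, h⟩)
    (B : ℕ → MvPolynomial (Fin (n + 3)) ℚ)
    (hB : ∀ m, B m = if m < n then (-1) ^ m *
      ∑ q ∈ Finset.range (m + 1), (-1) ^ q * Cc q *
        ∑ i ∈ Finset.range (m - q + 1),
          (Nat.choose (n - q + 1) i : MvPolynomial (Fin (n + 3)) ℚ) *
            X 0 ^ i * X 1 ^ (m - q - i)
      else 0) :
    (∑ i ∈ Finset.range (n + 1),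
      (Nat.choose (n + 1 - i) (n - i) : MvPolynomial (Fin (n + 3)) ℚ) *
        (X 0 ^ (n - i) * B i +
          X 0 ^ (n - i) * X 1 * (if i = 0 then 0 else B (i - 1)))) - Cc n =
    ∑ q ∈ Finset.range (n + 1),
      (-1) ^ (n + q - 1) * Cc q *
        ∑ j ∈ Finset.range (n - q + 1),
          (Nat.choose (n - q + 1) j : MvPolynomial (Fin (n + 3)) ℚ) *
            X 0 ^ j * X 1 ^ (n - q - j) := by
  set x : MvPolynomial (Fin (n + 3)) ℚ := X 0
  set y : MvPolynomial (Fin (n + 3)) ℚ := X 1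
  have hB1 : ∀ m, m < n → B m = auxT x y Cc n m := by
    intro m hm
    rw [hB, if_pos hm]; rfl
  have hBn : B n = auxT x y Cc n n - auxT x y Cc n n := by
    rw [hB, if_neg (lt_irrefl n), sub_self]
  have hR : ∑ q ∈ Finset.range (n + 1),
      (-1) ^ (n + q - 1) * Cc q *
        ∑ j ∈ Finset.range (n - q + 1),
          (Nat.choose (n - q + 1) j : MvPolynomial (Fin (n + 3)) ℚ) *
            x ^ j * y ^ (n - q - j) = - auxT x y Cc n n := by
    unfold auxT
    rw [Finset.mul_sum, ← Finset.sum_neg_distrib]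
    refine Finset.sum_congr rfl fun q _ => ?_
    have e : (-1 : MvPolynomial (Fin (n + 3)) ℚ) ^ n * (-1) ^ q = - (-1) ^ (n + q - 1) := by
      obtain ⟨k, rfl⟩ : ∃ k, n = k + 1 := ⟨n - 1, by omega⟩
      have : k + 1 + q - 1 = k + q := by omega
      rw [this]; ring
    change _ * _ * auxS x y (n - q + 1) (n - q) = _
    linear_combination (Cc q * auxS x y (n - q + 1) (n - q)) * (e)
  rw [hR]
  have hterm : ∀ i, i ≤ n → auxT x y Cc n i + y * (if i = 0 then 0 else B (i - 1)) =
      (-1) ^ i * ∑ q ∈ Finset.range (i + 1), (-1) ^ q * Cc q *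
        ((Nat.choose (n - q + 1) (i - q) : MvPolynomial (Fin (n + 3)) ℚ) * x ^ (i - q)) := by
    intro i hi
    cases i with
    | zero => simp [auxT, auxS]
    | succ m =>
      rw [← auxT_succ x y, if_neg (Nat.succ_ne_zero m), Nat.add_sub_cancel, hB1 m (by omega)]
  have hch : ∀ i, i ≤ n → Nat.choose (n + 1 - i) (n - i) = n + 1 - i := by
    intro i hi
    have : n + 1 - i = (n - i) + 1 := by omega
    rw [this, Nat.choose_succ_self_right]
  have hm := aux_main x Cc n
  rw [Finset.sum_range_succ] at hm ⊢
  rw [← hterm n le_rfl] at hm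
  rw [hch n le_rfl, hBn]
  have hs : ∀ i ∈ Finset.range n,
      (Nat.choose (n + 1 - i) (n - i) : MvPolynomial (Fin (n + 3)) ℚ) *
        (x ^ (n - i) * B i + x ^ (n - i) * y * (if i = 0 then 0 else B (i - 1))) =
      ((n + 1 - i : ℕ) : MvPolynomial (Fin (n + 3)) ℚ) * (x ^ (n - i) *
      ((-1) ^ i * ∑ q ∈ Finset.range (i + 1), (-1) ^ q * Cc q *
        ((Nat.choose (n - q + 1) (i - q) : MvPolynomial (Fin (n + 3)) ℚ) * x ^ (i - q)))) := by
    intro i hi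
    have hi := Finset.mem_range.1 hi
    rw [hch i hi.le, ← hterm i hi.le, hB1 i hi]
    ring
  rw [Finset.sum_congr rfl hs]
  have e1 : n + 1 - n = 1 := by omega
  rw [e1, Nat.sub_self] at hm ⊢
  push_cast at hm ⊢
  linear_combination hm
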